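/- Consider a directed network: finite vertex set V, finite edge set E, each edge e with a start and an end vertex in V (incidence n^e(v) = −1 at the start, +1 at the end, 0 otherwise) and length ℓ^e > 0, continuous a^e : [0,ℓ^e] → ℝ with a^e ≥ a₀ > 0, and constant b^e ≠ 0; assume flow conservation Σ_{e∈E(v)} b^e n^e(v) = 0 at every inner vertex v ∈ V₀. Let (u₁^e, û₁^v) and (u₂^e, û₂^v) be two classical solutions of the network transport problem on [0,T] with the same initial values u₁^e(·,0) = u₂^e(·,0) on every edge and the same inflow data g^v at every inflow vertex. Then u₁^e = u₂^e on [0,ℓ^e] × [0,T] for every edge e. -/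

import Mathlib

open Finset

/-- Incidence of edge `e` at vertex `v`: `+1` at the end vertex, `−1` at the start
vertex, `0` otherwise. -/
def incid {V E : Type*} [DecidableEq V] (src tgt : E → V) (e : E) (v : V) : ℝ :=
  (if tgt e = v then (1 : ℝ) else 0) - (if src e = v then (1 : ℝ) else 0)

/-- The set `E(v)` of edges incident to the vertex `v`. -/
def edgesAt {V E : Type*} [DecidableEq V] [Fintype E] (src tgt : E → V) (v : V) :
    Finset E :=
  Finset.univ.filter fun e => src e = v ∨ tgt e = v

/-- The inner vertices `V₀ = {v : |E(v)| ≥ 2}`. -/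
def innerV {V E : Type*} [DecidableEq V] [Fintype V] [Fintype E] (src tgt : E → V) :
    Finset V :=
  Finset.univ.filter fun v => 2 ≤ (edgesAt src tgt v).card

/-- The boundary vertices `V_∂ = V \ V₀`. -/
def bdryV {V E : Type*} [DecidableEq V] [Fintype V] [Fintype E] (src tgt : E → V) :
    Finset V :=
  Finset.univ.filter fun v => (edgesAt src tgt v).card < 2

/-- The edges `E_in(v)` producing flow into the vertex `v`. -/
noncomputable def einEdges {V E : Type*} [DecidableEq V] [Fintype E]
    (src tgt : E → V) (b : E → ℝ) (v : V) : Finset E :=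
  (edgesAt src tgt v).filter fun e => 0 < b e * incid src tgt e v

/-- The edges `E_out(v)` producing flow out of the vertex `v`. -/
noncomputable def eoutEdges {V E : Type*} [DecidableEq V] [Fintype E]
    (src tgt : E → V) (b : E → ℝ) (v : V) : Finset E :=
  (edgesAt src tgt v).filter fun e => b e * incid src tgt e v < 0

/-- The inflow boundary vertices `V_∂^in`. -/
noncomputable def inflowBdry {V E : Type*} [DecidableEq V] [Fintype V] [Fintype E]
    (src tgt : E → V) (b : E → ℝ) : Finset V :=
  (bdryV src tgt).filter fun v =>
    ∃ e ∈ edgesAt src tgt v, b e * incid src tgt e v < 0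

/-- The outflow boundary vertices `V_∂^out`. -/
noncomputable def outflowBdry {V E : Type*} [DecidableEq V] [Fintype V] [Fintype E]
    (src tgt : E → V) (b : E → ℝ) : Finset V :=
  (bdryV src tgt).filter fun v =>
    ∃ e ∈ edgesAt src tgt v, 0 < b e * incid src tgt e v

/-- The trace `u^e(v,t)` of the edge function `u e` at the vertex `v`:
`u e (ℓ e) t` if `v` is the end vertex of `e` and `u e 0 t` otherwise. -/
def vtxTrace {V E : Type*} [DecidableEq V] (tgt : E → V) (ℓ : E → ℝ)
    (u : E → ℝ → ℝ → ℝ) (e : E) (v : V) (t : ℝ) : ℝ :=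
  if tgt e = v then u e (ℓ e) t else u e 0 t


/-!
The difference `w` of two solutions solves the homogeneous problem, and on every edge so does `w²`:
`a ∂ₜ(w²) + b ∂ₓ(w²) = 0`. Integrating over `[0, ℓ] × [0, t]` and summing over the edges, the energy
`∑ₑ ∫ a w²` at time `t` equals minus the time integral of the vertex fluxes `∑_{e ∈ E(v)} b n w²`.
These are nonnegative: at an inner vertex the mixing condition makes `ŵ` the weighted mean of the
incoming traces, so by convexity (Jensen for the square) and flow conservation the outgoing energy
is at most the incoming one; at a boundary vertex nothing flows in. Hence the energy vanishes.

The energy density is integrated in the form `a (w(·, t)² - w(·, 0)²) = -b ∫₀ᵗ ∂ₓ(w²) ds`, whose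
right-hand side is continuous in space whatever the coefficient `a`.
-/

section Transport

variable {v : ℝ → ℝ → ℝ} {a : ℝ → ℝ} {b c x₀ x₁ y t₀ t₁ : ℝ}

lemma continuous_deriv_left (hv : ContDiff ℝ 1 (Function.uncurry v)) :
    Continuous fun p : ℝ × ℝ => deriv (fun z => v z p.2) p.1 := by
  have hpartial : ContDiff ℝ 0 fun p : ℝ × ℝ => fderiv ℝ (fun z => v z p.2) p.1 1 :=
    ContDiff.fderiv_apply (m := 1) (hv.comp (g := Function.uncurry v)
      (f := fun q : (ℝ × ℝ) × ℝ => (q.2, q.1.2)) (by fun_prop)) contDiff_fst contDiff_const le_rfl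
  simpa only [fderiv_apply_one_eq_deriv] using hpartial.continuous

lemma contDiff_curry_left (hv : ContDiff ℝ 1 (Function.uncurry v)) (t : ℝ) :
    ContDiff ℝ 1 fun y => v y t :=
  hv.comp (contDiff_prodMk_left t)

lemma contDiff_curry_right (hv : ContDiff ℝ 1 (Function.uncurry v)) (y : ℝ) : ContDiff ℝ 1 (v y) :=
  hv.comp (contDiff_prodMk_right y)

lemma mul_sub_eq_neg_mul_integral_deriv_of_transport (hv : ContDiff ℝ 1 (Function.uncurry v))
    (hpde : ∀ s ∈ Set.uIcc t₀ t₁, c * deriv (v y) s + b * deriv (fun z => v z s) y = 0) :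
    c * (v y t₁ - v y t₀) = -b * ∫ s in t₀..t₁, deriv (fun z => v z s) y := by
  have hvy := contDiff_curry_right hv y
  rw [← intervalIntegral.integral_deriv_eq_sub
      (fun s _ => hvy.differentiable one_ne_zero s)
      (hvy.continuous_deriv_one.intervalIntegrable _ _),
    ← intervalIntegral.integral_const_mul, ← intervalIntegral.integral_const_mul]
  exact intervalIntegral.integral_congr fun s hs => by linear_combination hpde s hs

lemma continuousOn_mul_sub_of_transport (hv : ContDiff ℝ 1 (Function.uncurry v)) {S : Set ℝ}
    (hpde : ∀ y ∈ S, ∀ s ∈ Set.uIcc t₀ t₁,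
      a y * deriv (v y) s + b * deriv (fun z => v z s) y = 0) :
    ContinuousOn (fun y => a y * (v y t₁ - v y t₀)) S := by
  have hintegral : Continuous fun y => ∫ s in t₀..t₁, deriv (fun z => v z s) y :=
    intervalIntegral.continuous_parametric_intervalIntegral_of_continuous'
      (continuous_deriv_left hv) t₀ t₁
  exact (hintegral.const_mul (-b)).continuousOn.congr fun y hy =>
    mul_sub_eq_neg_mul_integral_deriv_of_transport hv (hpde y hy)

lemma integral_mul_sub_eq_of_transport (hv : ContDiff ℝ 1 (Function.uncurry v))
    (hpde : ∀ y ∈ Set.uIcc x₀ x₁, ∀ s ∈ Set.uIcc t₀ t₁,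
      a y * deriv (v y) s + b * deriv (fun z => v z s) y = 0) :
    ∫ y in x₀..x₁, a y * (v y t₁ - v y t₀) = -b * ∫ s in t₀..t₁, (v x₁ s - v x₀ s) := by
  have hcont := continuous_deriv_left hv
  have hint : MeasureTheory.IntegrableOn (Function.uncurry fun y s => deriv (fun z => v z s) y)
      (Set.uIoc x₀ x₁ ×ˢ Set.uIoc t₀ t₁) :=
    (hcont.continuousOn.integrableOn_compact (isCompact_uIcc.prod isCompact_uIcc)).mono_set
      (Set.prod_mono Set.uIoc_subset_uIcc Set.uIoc_subset_uIcc)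
  have hspace (s : ℝ) : ∫ y in x₀..x₁, deriv (fun z => v z s) y = v x₁ s - v x₀ s :=
    intervalIntegral.integral_deriv_eq_sub
      (fun y _ => (contDiff_curry_left hv s).differentiable one_ne_zero y)
      ((contDiff_curry_left hv s).continuous_deriv_one.intervalIntegrable _ _)
  calc ∫ y in x₀..x₁, a y * (v y t₁ - v y t₀)
      = ∫ y in x₀..x₁, -b * ∫ s in t₀..t₁, deriv (fun z => v z s) y :=
        intervalIntegral.integral_congr fun y hy =>
          mul_sub_eq_neg_mul_integral_deriv_of_transport hv (hpde y hy)
    _ = -b * ∫ s in t₀..t₁, ∫ y in x₀..x₁, deriv (fun z => v z s) y := by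
        rw [intervalIntegral.integral_const_mul,
          MeasureTheory.intervalIntegral_intervalIntegral_swap hint]
    _ = -b * ∫ s in t₀..t₁, (v x₁ s - v x₀ s) := by simp only [hspace]

lemma transport_sq {t : ℝ} (hv : ContDiff ℝ 1 (Function.uncurry v))
    (hpde : c * deriv (v y) t + b * deriv (fun z => v z t) y = 0) :
    c * deriv (fun s => v y s ^ 2) t + b * deriv (fun z => v z t ^ 2) y = 0 := by
  rw [deriv_fun_pow ((contDiff_curry_right hv y).differentiable one_ne_zero t),
    deriv_fun_pow ((contDiff_curry_left hv t).differentiable one_ne_zero y)]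
  linear_combination 2 * v y t * hpde

end Transport

lemma eq_zero_of_integral_nonpos {f : ℝ → ℝ} {x₀ x₁ : ℝ} (hlt : x₀ < x₁)
    (hf : ContinuousOn f (Set.Icc x₀ x₁)) (hnonneg : ∀ x ∈ Set.Icc x₀ x₁, 0 ≤ f x)
    (hint : ∫ x in x₀..x₁, f x ≤ 0) : ∀ x ∈ Set.Icc x₀ x₁, f x = 0 := by
  intro x hx
  by_contra hne
  exact hint.not_gt <| intervalIntegral.integral_pos hlt hf
    (fun z hz => hnonneg z (Set.Ioc_subset_Icc_self hz))
    ⟨x, hx, (hnonneg x hx).lt_of_ne' hne⟩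

-- Expand `x² = (x - c)² + 2 c (x - c) + c²`: mixing kills the middle term.
lemma sum_mul_sq_nonneg_of_mixing {ι R : Type*} [CommRing R] [LinearOrder R]
    [IsStrictOrderedRing R] {s : Finset ι} {m x : ι → R} {c : R} (hnet : 0 ≤ ∑ i ∈ s, m i)
    (hout : ∀ i ∈ s, m i < 0 → x i = c)
    (hmix : (∑ i ∈ s with 0 < m i, m i) * c = ∑ i ∈ s with 0 < m i, m i * x i) :
    0 ≤ ∑ i ∈ s, m i * x i ^ 2 := by
  have hpos_of_ne (i) (hi : i ∈ s) (hne : m i * (x i - c) ≠ 0) : 0 < m i := by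
    by_contra! hle
    rcases hle.lt_or_eq with hneg | hzero
    · exact hne (by rw [hout i hi hneg, sub_self, mul_zero])
    · exact hne (by rw [hzero, zero_mul])
  have hmean : ∑ i ∈ s, m i * (x i - c) = 0 := by
    rw [← sum_filter_of_ne hpos_of_ne]
    simp only [mul_sub, sum_sub_distrib, ← hmix, ← sum_mul, sub_self]
  have hvariance : 0 ≤ ∑ i ∈ s, m i * (x i - c) ^ 2 := sum_nonneg fun i hi => by
    rcases lt_or_ge (m i) 0 with hneg | hnonneg
    · simp [hout i hi hneg]
    · exact mul_nonneg hnonneg (sq_nonneg _)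
  calc 0 ≤ ∑ i ∈ s, m i * (x i - c) ^ 2 + 2 * c * ∑ i ∈ s, m i * (x i - c)
          + (∑ i ∈ s, m i) * c ^ 2 := by
        rw [hmean, mul_zero, add_zero]
        exact add_nonneg hvariance (mul_nonneg hnet (sq_nonneg c))
    _ = ∑ i ∈ s, m i * x i ^ 2 := by
        rw [mul_sum, sum_mul, ← sum_add_distrib, ← sum_add_distrib]
        exact sum_congr rfl fun i _ => by ring

section Network

variable {V E : Type*} [DecidableEq V] {src tgt : E → V} {ℓ : E → ℝ}

lemma vtxTrace_tgt (u : E → ℝ → ℝ → ℝ) (e : E) (t : ℝ) :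
    vtxTrace tgt ℓ u e (tgt e) t = u e (ℓ e) t :=
  if_pos rfl

lemma vtxTrace_src {e : E} (hne : src e ≠ tgt e) (u : E → ℝ → ℝ → ℝ) (t : ℝ) :
    vtxTrace tgt ℓ u e (src e) t = u e 0 t :=
  if_neg hne.symm

lemma vtxTrace_sub (u₁ u₂ : E → ℝ → ℝ → ℝ) (e : E) (v : V) (t : ℝ) :
    vtxTrace tgt ℓ (u₁ - u₂) e v t = vtxTrace tgt ℓ u₁ e v t - vtxTrace tgt ℓ u₂ e v t := by
  unfold vtxTrace
  split_ifs <;> rfl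

variable [Fintype V] [Fintype E]

lemma sum_sum_edgesAt_mul_incid_mul (b : E → ℝ) (f : E → V → ℝ) :
    ∑ v, ∑ e ∈ edgesAt src tgt v, b e * incid src tgt e v * f e v
      = ∑ e, b e * (f e (tgt e) - f e (src e)) := by
  have hincident (v : V) (e : E) (_ : e ∈ univ) (hne : b e * incid src tgt e v * f e v ≠ 0) :
      src e = v ∨ tgt e = v := by
    contrapose! hne
    simp [incid, hne]
  simp only [edgesAt, sum_filter_of_ne (hincident _)]
  rw [sum_comm]
  simp [incid, sub_mul, mul_sub]

/-- The functions `u` on the edges and `uhat` at the vertices form a continuously differentiable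
solution of the network transport problem on `[0, T]` with inflow data `g`. As `u e` is defined on
all of `ℝ × ℝ`, its derivatives on the boundary of `[0, ℓ e] × [0, T]` are two-sided; `uhat v` is
an arbitrary function of time. -/
structure IsTransportSolution (src tgt : E → V) (ℓ : E → ℝ) (a : E → ℝ → ℝ) (b : E → ℝ) (T : ℝ)
    (g : V → ℝ → ℝ) (u : E → ℝ → ℝ → ℝ) (uhat : V → ℝ → ℝ) : Prop where
  contDiff (e : E) : ContDiff ℝ 1 (Function.uncurry (u e))
  transport : ∀ e, ∀ y ∈ Set.Icc 0 (ℓ e), ∀ t ∈ Set.Icc 0 T,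
    a e y * deriv (u e y) t + b e * deriv (fun z => u e z t) y = 0
  coupling : ∀ v, ∀ e ∈ eoutEdges src tgt b v, ∀ t ∈ Set.Icc 0 T,
    vtxTrace tgt ℓ u e v t = uhat v t
  inflow : ∀ v ∈ inflowBdry src tgt b, ∀ t ∈ Set.Icc 0 T, uhat v t = g v t
  mixing : ∀ v ∈ innerV src tgt ∪ outflowBdry src tgt b, ∀ t ∈ Set.Icc 0 T,
    (∑ e ∈ einEdges src tgt b v, b e * incid src tgt e v) * uhat v t
      = ∑ e ∈ einEdges src tgt b v, b e * incid src tgt e v * vtxTrace tgt ℓ u e v t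

namespace IsTransportSolution

variable {a : E → ℝ → ℝ} {b : E → ℝ} {T t : ℝ}

protected lemma sub {g₁ g₂ : V → ℝ → ℝ} {u₁ u₂ : E → ℝ → ℝ → ℝ} {uhat₁ uhat₂ : V → ℝ → ℝ}
    (h₁ : IsTransportSolution src tgt ℓ a b T g₁ u₁ uhat₁)
    (h₂ : IsTransportSolution src tgt ℓ a b T g₂ u₂ uhat₂) :
    IsTransportSolution src tgt ℓ a b T (g₁ - g₂) (u₁ - u₂) (uhat₁ - uhat₂) where
  contDiff e := (h₁.contDiff e).sub (h₂.contDiff e)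
  transport e y hy t ht := by
    have htime := deriv_fun_sub
      ((contDiff_curry_right (h₁.contDiff e) y).differentiable one_ne_zero t)
      ((contDiff_curry_right (h₂.contDiff e) y).differentiable one_ne_zero t)
    have hspace := deriv_fun_sub
      ((contDiff_curry_left (h₁.contDiff e) t).differentiable one_ne_zero y)
      ((contDiff_curry_left (h₂.contDiff e) t).differentiable one_ne_zero y)
    change a e y * deriv (fun s => u₁ e y s - u₂ e y s) t
      + b e * deriv (fun z => u₁ e z t - u₂ e z t) y = 0
    rw [htime, hspace]
    linear_combination h₁.transport e y hy t ht - h₂.transport e y hy t ht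
  coupling v e he t ht := by
    rw [vtxTrace_sub, h₁.coupling v e he t ht, h₂.coupling v e he t ht]
    rfl
  inflow v hv t ht := congrArg₂ (· - ·) (h₁.inflow v hv t ht) (h₂.inflow v hv t ht)
  mixing v hv t ht := by
    simp only [vtxTrace_sub, Pi.sub_apply, mul_sub, sum_sub_distrib, h₁.mixing v hv t ht,
      h₂.mixing v hv t ht]

variable {g : V → ℝ → ℝ} {u : E → ℝ → ℝ → ℝ} {uhat : V → ℝ → ℝ}

lemma contDiff_sq (h : IsTransportSolution src tgt ℓ a b T g u uhat) (e : E) :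
    ContDiff ℝ 1 (Function.uncurry fun y s => u e y s ^ 2) :=
  (h.contDiff e).pow 2

lemma sq_transport (h : IsTransportSolution src tgt ℓ a b T g u uhat) (ht : t ∈ Set.Icc 0 T)
    (e : E) : ∀ y ∈ Set.Icc 0 (ℓ e), ∀ s ∈ Set.uIcc 0 t,
      a e y * deriv (fun s => u e y s ^ 2) s + b e * deriv (fun z => u e z s ^ 2) y = 0 := by
  intro y hy s hs
  rw [Set.uIcc_of_le ht.1] at hs
  exact transport_sq (h.contDiff e) (h.transport e y hy s ⟨hs.1, hs.2.trans ht.2⟩)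

theorem energy_balance (h : IsTransportSolution src tgt ℓ a b T g u uhat)
    (hloop : ∀ e, src e ≠ tgt e) (hℓ : ∀ e, 0 ≤ ℓ e) (ht : t ∈ Set.Icc 0 T) :
    ∑ e, ∫ y in 0..ℓ e, a e y * (u e y t ^ 2 - u e y 0 ^ 2)
      = -∫ s in 0..t, ∑ v, ∑ e ∈ edgesAt src tgt v,
          b e * incid src tgt e v * vtxTrace tgt ℓ u e v s ^ 2 := by
  have hcont (e : E) (y : ℝ) : Continuous (u e y) :=
    (contDiff_curry_right (h.contDiff e) y).continuous
  have hflux (e : E) :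
      IntervalIntegrable (fun s => b e * (u e (ℓ e) s ^ 2 - u e 0 s ^ 2))
        MeasureTheory.volume 0 t :=
    ((((hcont e _).pow 2).sub ((hcont e _).pow 2)).const_mul _).intervalIntegrable _ _
  calc ∑ e, ∫ y in 0..ℓ e, a e y * (u e y t ^ 2 - u e y 0 ^ 2)
      = ∑ e, -b e * ∫ s in 0..t, (u e (ℓ e) s ^ 2 - u e 0 s ^ 2) :=
        sum_congr rfl fun e _ => integral_mul_sub_eq_of_transport (h.contDiff_sq e)
          (by simpa only [Set.uIcc_of_le (hℓ e)] using h.sq_transport ht e)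
    _ = -∫ s in 0..t, ∑ e, b e * (u e (ℓ e) s ^ 2 - u e 0 s ^ 2) := by
        rw [intervalIntegral.integral_finsetSum fun e _ => hflux e]
        simp only [intervalIntegral.integral_const_mul, neg_mul, sum_neg_distrib]
    _ = _ := by
        simp only [sum_sum_edgesAt_mul_incid_mul, vtxTrace_tgt, vtxTrace_src (hloop _)]

lemma sum_edgesAt_mul_sq_nonneg (h : IsTransportSolution src tgt ℓ a b T 0 u uhat)
    (hnet : ∀ v ∈ innerV src tgt, 0 ≤ ∑ e ∈ edgesAt src tgt v, b e * incid src tgt e v)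
    (ht : t ∈ Set.Icc 0 T) (v : V) :
    0 ≤ ∑ e ∈ edgesAt src tgt v, b e * incid src tgt e v * vtxTrace tgt ℓ u e v t ^ 2 := by
  have hout (e) (he : e ∈ edgesAt src tgt v) (hneg : b e * incid src tgt e v < 0) :
      vtxTrace tgt ℓ u e v t = uhat v t :=
    h.coupling v e (mem_filter.2 ⟨he, hneg⟩) t ht
  by_cases hv : v ∈ innerV src tgt
  · exact sum_mul_sq_nonneg_of_mixing (hnet v hv) hout (h.mixing v (mem_union_left _ hv) t ht)
  have hbdry : v ∈ bdryV src tgt := by simpa [innerV, bdryV] using hv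
  refine sum_nonneg fun e he => ?_
  rcases lt_or_ge (b e * incid src tgt e v) 0 with hneg | hnonneg
  · have hinflow : v ∈ inflowBdry src tgt b := mem_filter.2 ⟨hbdry, e, he, hneg⟩
    simp [hout e he hneg, h.inflow v hinflow t ht]
  · positivity

theorem eq_zero (h : IsTransportSolution src tgt ℓ a b T 0 u uhat)
    (hloop : ∀ e, src e ≠ tgt e) (hℓ : ∀ e, 0 < ℓ e)
    (ha : ∀ e, ∀ y ∈ Set.Icc 0 (ℓ e), 0 < a e y)
    (hnet : ∀ v ∈ innerV src tgt, 0 ≤ ∑ e ∈ edgesAt src tgt v, b e * incid src tgt e v)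
    (hinit : ∀ e, ∀ y ∈ Set.Icc 0 (ℓ e), u e y 0 = 0) :
    ∀ e, ∀ y ∈ Set.Icc 0 (ℓ e), ∀ t ∈ Set.Icc 0 T, u e y t = 0 := by
  intro e y hy t ht
  have hdensity (e) : ∀ y ∈ Set.Icc 0 (ℓ e), 0 ≤ a e y * (u e y t ^ 2 - u e y 0 ^ 2) := by
    intro y hy
    rw [hinit e y hy, zero_pow two_ne_zero, sub_zero]
    exact mul_nonneg (ha e y hy).le (sq_nonneg _)
  have henergy : ∑ e, ∫ y in 0..ℓ e, a e y * (u e y t ^ 2 - u e y 0 ^ 2) ≤ 0 := by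
    rw [h.energy_balance hloop (fun e => (hℓ e).le) ht, neg_nonpos]
    exact intervalIntegral.integral_nonneg ht.1 fun s hs => sum_nonneg fun v _ =>
      h.sum_edgesAt_mul_sq_nonneg hnet ⟨hs.1, hs.2.trans ht.2⟩ v
  have hedge : ∫ y in 0..ℓ e, a e y * (u e y t ^ 2 - u e y 0 ^ 2) ≤ 0 :=
    (single_le_sum (fun e _ => intervalIntegral.integral_nonneg (hℓ e).le (hdensity e))
      (mem_univ e)).trans henergy
  have hzero : a e y * (u e y t ^ 2 - u e y 0 ^ 2) = 0 :=
    eq_zero_of_integral_nonpos (hℓ e)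
      (continuousOn_mul_sub_of_transport (h.contDiff_sq e) (h.sq_transport ht e))
      (hdensity e) hedge y hy
  simpa [(ha e y hy).ne', hinit e y hy] using hzero

end IsTransportSolution

theorem stmt_17_general {a : E → ℝ → ℝ} {b : E → ℝ} {T : ℝ} {g : V → ℝ → ℝ}
    {u₁ u₂ : E → ℝ → ℝ → ℝ} {uhat₁ uhat₂ : V → ℝ → ℝ}
    (hloop : ∀ e, src e ≠ tgt e) (hℓ : ∀ e, 0 < ℓ e)
    (ha : ∀ e, ∀ y ∈ Set.Icc 0 (ℓ e), 0 < a e y)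
    (hnet : ∀ v ∈ innerV src tgt, 0 ≤ ∑ e ∈ edgesAt src tgt v, b e * incid src tgt e v)
    (h₁ : IsTransportSolution src tgt ℓ a b T g u₁ uhat₁)
    (h₂ : IsTransportSolution src tgt ℓ a b T g u₂ uhat₂)
    (hinit : ∀ e, ∀ y ∈ Set.Icc 0 (ℓ e), u₁ e y 0 = u₂ e y 0) :
    ∀ e, ∀ y ∈ Set.Icc 0 (ℓ e), ∀ t ∈ Set.Icc 0 T, u₁ e y t = u₂ e y t := by
  have hdiff : IsTransportSolution src tgt ℓ a b T 0 (u₁ - u₂) (uhat₁ - uhat₂) := by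
    simpa only [sub_self] using h₁.sub h₂
  exact fun e y hy t ht => sub_eq_zero.1 <|
    hdiff.eq_zero hloop hℓ ha hnet (fun e y hy => sub_eq_zero.2 (hinit e y hy)) e y hy t ht

end Network

/-- Uniqueness for transport on a network: two classical solutions of the network
transport problem with the same initial values and the same inflow data coincide. -/
theorem stmt_17 {V E : Type*} [Fintype V] [Fintype E] [DecidableEq V] [DecidableEq E]
    (src tgt : E → V) (hloop : ∀ e, src e ≠ tgt e)
    (ℓ : E → ℝ) (hℓ : ∀ e, 0 < ℓ e)
    (a : E → ℝ → ℝ) (a₀ : ℝ) (ha₀ : 0 < a₀)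
    (ha : ∀ e, ContinuousOn (a e) (Set.Icc 0 (ℓ e)))
    (haa : ∀ e, ∀ y ∈ Set.Icc 0 (ℓ e), a₀ ≤ a e y)
    (b : E → ℝ) (hb : ∀ e, b e ≠ 0)
    (hcons : ∀ v ∈ innerV src tgt,
      ∑ e ∈ edgesAt src tgt v, b e * incid src tgt e v = 0)
    (T : ℝ) (hT : 0 < T)
    (u₁ u₂ : E → ℝ → ℝ → ℝ) (uhat₁ uhat₂ : V → ℝ → ℝ) (g : V → ℝ → ℝ)
    (hg : ∀ v, ContinuousOn (g v) (Set.Icc 0 T))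
    (hu₁ : ∀ e, ContDiff ℝ 1 (fun p : ℝ × ℝ => u₁ e p.1 p.2))
    (hu₂ : ∀ e, ContDiff ℝ 1 (fun p : ℝ × ℝ => u₂ e p.1 p.2))
    (huhat₁ : ∀ v, ContinuousOn (uhat₁ v) (Set.Icc 0 T))
    (huhat₂ : ∀ v, ContinuousOn (uhat₂ v) (Set.Icc 0 T))
    (hpde₁ : ∀ e, ∀ y ∈ Set.Icc 0 (ℓ e), ∀ t ∈ Set.Icc 0 T,
      a e y * deriv (fun s => u₁ e y s) t + b e * deriv (fun z => u₁ e z t) y = 0)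
    (hpde₂ : ∀ e, ∀ y ∈ Set.Icc 0 (ℓ e), ∀ t ∈ Set.Icc 0 T,
      a e y * deriv (fun s => u₂ e y s) t + b e * deriv (fun z => u₂ e z t) y = 0)
    (hcouple₁ : ∀ v : V, ∀ e ∈ eoutEdges src tgt b v, ∀ t ∈ Set.Icc 0 T,
      vtxTrace tgt ℓ u₁ e v t = uhat₁ v t)
    (hcouple₂ : ∀ v : V, ∀ e ∈ eoutEdges src tgt b v, ∀ t ∈ Set.Icc 0 T,
      vtxTrace tgt ℓ u₂ e v t = uhat₂ v t)
    (hinflow₁ : ∀ v ∈ inflowBdry src tgt b, ∀ t ∈ Set.Icc 0 T, uhat₁ v t = g v t)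
    (hinflow₂ : ∀ v ∈ inflowBdry src tgt b, ∀ t ∈ Set.Icc 0 T, uhat₂ v t = g v t)
    (hmix₁ : ∀ v ∈ innerV src tgt ∪ outflowBdry src tgt b, ∀ t ∈ Set.Icc 0 T,
      (∑ e ∈ einEdges src tgt b v, b e * incid src tgt e v) * uhat₁ v t
        = ∑ e ∈ einEdges src tgt b v, b e * incid src tgt e v * vtxTrace tgt ℓ u₁ e v t)
    (hmix₂ : ∀ v ∈ innerV src tgt ∪ outflowBdry src tgt b, ∀ t ∈ Set.Icc 0 T,
      (∑ e ∈ einEdges src tgt b v, b e * incid src tgt e v) * uhat₂ v t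
        = ∑ e ∈ einEdges src tgt b v, b e * incid src tgt e v * vtxTrace tgt ℓ u₂ e v t)
    (hinit : ∀ e, ∀ y ∈ Set.Icc 0 (ℓ e), u₁ e y 0 = u₂ e y 0) :
    ∀ e, ∀ y ∈ Set.Icc 0 (ℓ e), ∀ t ∈ Set.Icc 0 T, u₁ e y t = u₂ e y t :=
  stmt_17_general hloop hℓ (fun e y hy => ha₀.trans_le (haa e y hy))
    (fun v hv => (hcons v hv).ge) ⟨hu₁, hpde₁, hcouple₁, hinflow₁, hmix₁⟩
    ⟨hu₂, hpde₂, hcouple₂, hinflow₂, hmix₂⟩ hinit
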